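/- arXiv:2003.10161 — 2 statements merged into one kernel-verified Lean document; each statement's English description precedes it below -/
import Mathlib

section
/- For every r ≥ 1 and N ≥ 1, there exists an r-colouring of [N] = {1,...,N} with at most O(N^{3/2^r}) monochromatic solutions (x, y, z) to the equation x − y = z². -/
theorem colouring_aux (r : ℕ) : ∀ N : ℕ, 1 ≤ N →
      ∃ c : ℤ → Fin (r + 1),
        (((Finset.Icc 1 (N : ℤ) ×ˢ Finset.Icc 1 (N : ℤ) ×ˢ Finset.Icc 1 (N : ℤ)).filter
            (fun p => p.1 - p.2.1 = p.2.2 ^ 2 ∧ c p.1 = c p.2.1 ∧ c p.2.1 = c p.2.2)).card : ℝ) ≤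
          (N : ℝ) ^ ((3 : ℝ) / 2 ^ (r + 1)) := by
  induction r with
  | zero =>
    intro N hN
    refine ⟨fun _ => 0, ?_⟩
    have h0 : (0 : ℝ) < N := by exact_mod_cast hN
    have hs : ((Nat.sqrt N : ℕ) : ℝ) ≤ (N : ℝ) ^ ((1 : ℝ) / 2) := by
      rw [← Real.sqrt_eq_rpow]
      exact Real.nat_sqrt_le_real_sqrt
    have hcard : ((Finset.Icc 1 (N : ℤ) ×ˢ Finset.Icc 1 (N : ℤ) ×ˢ Finset.Icc 1 (N : ℤ)).filter
            (fun p => p.1 - p.2.1 = p.2.2 ^ 2 ∧ (0 : Fin (0 + 1)) = 0 ∧ (0 : Fin (0 + 1)) = 0)).card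
          ≤ (Finset.Icc 1 (N : ℤ) ×ˢ Finset.Icc 1 (Nat.sqrt N : ℤ)).card := by
      apply Finset.card_le_card_of_injOn (fun p => p.2)
      · rintro ⟨x, y, z⟩ h
        simp only [Finset.coe_filter, Finset.mem_product, Finset.mem_Icc, Set.mem_setOf_eq,
          Finset.coe_product, Finset.coe_Icc, Set.mem_prod, Set.mem_Icc] at h ⊢
        obtain ⟨⟨hx, hy, hz⟩, h, -⟩ := h
        refine ⟨hy, hz.1, ?_⟩
        by_contra hlt
        push Not at hlt
        have h1 : (N : ℤ) < (Nat.sqrt N + 1) * (Nat.sqrt N + 1) := by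
          exact_mod_cast Nat.lt_succ_sqrt N
        nlinarith [hx.2, hy.1]
      · rintro ⟨x, y, z⟩ h ⟨x', y', z'⟩ h' he
        simp only [Finset.coe_filter, Set.mem_setOf_eq, Prod.mk.injEq] at h h' he ⊢
        obtain ⟨rfl, rfl⟩ := he
        exact ⟨by linarith [h.2.1, h'.2.1], rfl, rfl⟩
    have e : (N : ℝ) ^ ((3 : ℝ) / 2 ^ (0 + 1)) = N * (N : ℝ) ^ ((1 : ℝ) / 2) := by
      rw [show (3 : ℝ) / 2 ^ (0 + 1) = 1 + 1 / 2 by norm_num, Real.rpow_add h0, Real.rpow_one]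
    rw [e]
    refine (Nat.cast_le.mpr hcard).trans ?_
    simp only [Finset.card_product, Int.card_Icc, add_sub_cancel_right, Int.toNat_natCast,
      Nat.cast_mul]
    gcongr
  | succ r ih =>
    intro N hN
    obtain ⟨c, hc⟩ := ih (Nat.sqrt N) (Nat.sqrt_pos.mpr hN)
    refine ⟨fun x => if x ≤ (Nat.sqrt N : ℤ) then (c x).castSucc else Fin.last _, ?_⟩
    have h0 : (0 : ℝ) ≤ N := by positivity
    have hs : ((Nat.sqrt N : ℕ) : ℝ) ≤ (N : ℝ) ^ ((1 : ℝ) / 2) := by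
      rw [← Real.sqrt_eq_rpow]
      exact Real.nat_sqrt_le_real_sqrt
    have hb : ((Nat.sqrt N : ℕ) : ℝ) ^ ((3 : ℝ) / 2 ^ (r + 1))
        ≤ (N : ℝ) ^ ((3 : ℝ) / 2 ^ (r + 1 + 1)) := by
      calc _ ≤ ((N : ℝ) ^ ((1 : ℝ) / 2)) ^ ((3 : ℝ) / 2 ^ (r + 1)) :=
            Real.rpow_le_rpow (by positivity) hs (by positivity)
        _ = _ := by
          rw [← Real.rpow_mul h0]
          congr 1
          rw [pow_succ 2 (r + 1)]
          field_simp
    refine le_trans ?_ (hc.trans hb)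
    refine Nat.cast_le.mpr (Finset.card_le_card ?_)
    rintro ⟨x, y, z⟩ h
    simp only [Finset.mem_filter, Finset.mem_product, Finset.mem_Icc] at h ⊢
    obtain ⟨⟨hx, hy, hz⟩, h, hxy, hyz⟩ := h
    have h1 : (N : ℤ) < (Nat.sqrt N + 1) * (Nat.sqrt N + 1) := by
      exact_mod_cast Nat.lt_succ_sqrt N
    have hzs : z ≤ (Nat.sqrt N : ℤ) := by
      by_contra hlt
      push Not at hlt
      nlinarith [hx.2, hy.1]
    have hne : ∀ a : Fin (r + 1), Fin.last (r + 1) ≠ a.castSucc :=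
      fun a => (Fin.castSucc_lt_last a).ne'
    have hys : y ≤ (Nat.sqrt N : ℤ) := by
      by_contra hlt
      rw [if_neg hlt, if_pos hzs] at hyz
      exact hne _ hyz
    have hxs : x ≤ (Nat.sqrt N : ℤ) := by
      by_contra hlt
      rw [if_neg hlt, if_pos hys] at hxy
      exact hne _ hxy
    rw [if_pos hxs, if_pos hys] at hxy
    rw [if_pos hys, if_pos hzs] at hyz
    exact ⟨⟨⟨hx.1, hxs⟩, ⟨hy.1, hys⟩, ⟨hz.1, hzs⟩⟩, h, Fin.castSucc_injective _ hxy,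
      Fin.castSucc_injective _ hyz⟩

/-- There exists an `r`-colouring of `[N]` with at most `O_r(N^{3/2^r})` monochromatic
solutions to `x − y = z²`. -/
theorem colouring_few_monochromatic_solutions :
    ∀ r : ℕ, 1 ≤ r → ∃ C : ℝ, 0 < C ∧ ∀ N : ℕ, 1 ≤ N →
      ∃ c : ℤ → Fin r,
        (((Finset.Icc 1 (N : ℤ) ×ˢ Finset.Icc 1 (N : ℤ) ×ˢ Finset.Icc 1 (N : ℤ)).filter
            (fun p => p.1 - p.2.1 = p.2.2 ^ 2 ∧ c p.1 = c p.2.1 ∧ c p.2.1 = c p.2.2)).card : ℝ) ≤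
          C * (N : ℝ) ^ ((3 : ℝ) / 2 ^ r) := by
  intro r hr
  obtain ⟨k, rfl⟩ : ∃ k, r = k + 1 := ⟨r - 1, by omega⟩
  refine ⟨1, one_pos, fun N hN => ?_⟩
  rw [one_mul]
  exact colouring_aux k N hN
end

section
/- For any nonzero integers a₁, ..., a_s with s ≥ 5, the number of solutions (x₁, ..., x_s) ∈ [N]^s to a₁x₁² + ⋯ + a_s x_s² = 0 is O(N^{s−2}), where the implied constant depends on the coefficients. -/
/-- The additive character `x ↦ e(x) = exp(2πix)`. -/
noncomputable def dqE (x : ℝ) : ℂ := Complex.exp (Complex.I * ((2 * Real.pi * x : ℝ) : ℂ))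

lemma dqE_add (x y : ℝ) : dqE (x + y) = dqE x * dqE y := by
  unfold dqE
  rw [← Complex.exp_add]
  congr 1
  push_cast
  ring

lemma dqE_norm (x : ℝ) : ‖dqE x‖ = 1 := by
  unfold dqE
  rw [Complex.norm_exp_I_mul_ofReal]

lemma dqE_int (n : ℤ) : dqE n = 1 := by
  unfold dqE
  rw [Complex.exp_eq_one_iff]
  exact ⟨n, by push_cast; ring⟩

lemma dqE_conj (x : ℝ) : (starRingEnd ℂ) (dqE x) = dqE (-x) := by
  unfold dqE
  rw [← Complex.exp_conj, map_mul, Complex.conj_I, Complex.conj_ofReal]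
  congr 1
  push_cast
  ring

lemma dqE_nat_mul (n : ℕ) (x : ℝ) : dqE (n * x) = dqE x ^ n := by
  unfold dqE
  rw [← Complex.exp_nat_mul]
  congr 1
  push_cast
  ring

/-- Distance to the nearest integer. -/
noncomputable def dqD (x : ℝ) : ℝ := |x - round x|

lemma dqE_sub_one (x : ℝ) : 4 * dqD x ≤ ‖dqE x - 1‖ := by
  have h1 : dqE x = dqE (x - round x) := by
    have : x = (x - round x) + (round x : ℤ) := by ring
    conv_lhs => rw [this, dqE_add, dqE_int, mul_one]
  rw [h1]
  unfold dqD
  have h2 := abs_sub_round x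
  set u := x - round x
  unfold dqE
  rw [Complex.norm_exp_I_mul_ofReal_sub_one]
  have h3 : 2 * Real.pi * u / 2 = Real.pi * u := by ring
  rw [h3, norm_mul, Real.norm_eq_abs, Real.norm_eq_abs]
  have h4 : |Real.sin (Real.pi * u)| = |Real.sin (Real.pi * |u|)| := by
    rcases abs_cases u with h | h
    · rw [h.1]
    · rw [h.1, mul_neg, Real.sin_neg, abs_neg]
  have h5 := Real.mul_le_sin (x := Real.pi * |u|) (by positivity)
    (by nlinarith [Real.pi_pos])
  have h6 : 2 / Real.pi * (Real.pi * |u|) = 2 * |u| := by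
    field_simp
  rw [h4]
  have := le_abs_self (Real.sin (Real.pi * |u|))
  rw [abs_of_pos (by norm_num : (0:ℝ) < 2)]
  linarith

lemma dq_geom (θ : ℝ) (a b : ℤ) :
    ‖∑ y ∈ Finset.Icc a b, dqE (θ * y)‖ * dqD θ ≤ 1 := by
  have hs : ∑ y ∈ Finset.Icc a b, dqE (θ * y)
      = dqE (θ * a) * ∑ k ∈ Finset.range (b + 1 - a).toNat, dqE θ ^ k := by
    rw [Int.Icc_eq_finset_map, Finset.sum_map, Finset.mul_sum]
    refine Finset.sum_congr rfl fun k _ => ?_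
    rw [← dqE_nat_mul, ← dqE_add]
    congr 1
    simp
    ring
  rw [hs, norm_mul, dqE_norm, one_mul]
  set n := (b + 1 - a).toNat
  have h1 : ‖∑ k ∈ Finset.range n, dqE θ ^ k‖ * ‖dqE θ - 1‖ ≤ 2 := by
    rw [← norm_mul, geom_sum_mul]
    calc ‖dqE θ ^ n - 1‖ ≤ ‖dqE θ ^ n‖ + ‖(1:ℂ)‖ := norm_sub_le _ _
      _ = 2 := by rw [norm_pow, dqE_norm]; norm_num
  have h2 := mul_le_mul_of_nonneg_left (dqE_sub_one θ)
    (norm_nonneg (∑ k ∈ Finset.range n, dqE θ ^ k))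
  linarith

/-- The quadratic Weyl sum. -/
noncomputable def dqF (N : ℕ) (α : ℝ) : ℂ := ∑ x ∈ Finset.Icc (1 : ℤ) N, dqE (α * (x : ℝ) ^ 2)

/-- The differenced sums. -/
noncomputable def dqG (N : ℕ) (α : ℝ) (h : ℤ) : ℝ :=
  ‖∑ y ∈ Finset.Icc (max 1 (1 - h)) (min (N : ℤ) (N - h)), dqE (2 * α * h * (y : ℝ))‖

lemma dqG_nonneg (N : ℕ) (α : ℝ) (h : ℤ) : 0 ≤ dqG N α h := norm_nonneg _

lemma dqG_le (N : ℕ) (α : ℝ) (h : ℤ) : dqG N α h ≤ N := by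
  unfold dqG
  refine (norm_sum_le _ _).trans ?_
  simp only [dqE_norm, Finset.sum_const, nsmul_eq_mul, mul_one, Int.card_Icc]
  have : (min (N : ℤ) (N - h) + 1 - max 1 (1 - h)).toNat ≤ N := by omega
  exact_mod_cast this

lemma dqG_mul (N : ℕ) (α : ℝ) (h : ℤ) : dqG N α h * dqD (2 * α * h) ≤ 1 := dq_geom _ _ _

lemma dqF_sq (N : ℕ) (α : ℝ) :
    ‖dqF N α‖ ^ 2 ≤ ∑ h ∈ Finset.Icc (-(N : ℤ)) N, dqG N α h := by
  have h1 : ((‖dqF N α‖ ^ 2 : ℝ) : ℂ) = ∑ h ∈ Finset.Icc (-(N : ℤ)) N,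
      dqE (α * (h:ℝ) ^ 2) * ∑ y ∈ Finset.Icc (max 1 (1 - h)) (min (N : ℤ) (N - h)),
        dqE (2 * α * h * (y : ℝ)) := by
    push_cast
    rw [← Complex.conj_mul', dqF, map_sum, Finset.sum_mul_sum]
    have h2 : ∀ y ∈ Finset.Icc (1:ℤ) N, ∑ x ∈ Finset.Icc (1:ℤ) N,
        (starRingEnd ℂ) (dqE (α * (y:ℝ) ^ 2)) * dqE (α * (x:ℝ) ^ 2)
        = ∑ h ∈ Finset.Icc (-(N : ℤ)) N, if y + h ∈ Finset.Icc (1:ℤ) N then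
            dqE (α * (h:ℝ) ^ 2) * dqE (2 * α * h * (y : ℝ)) else 0 := by
      intro y hy
      rw [← Finset.sum_filter]
      refine Finset.sum_bij' (fun x _ => x - y) (fun h _ => y + h) ?_ ?_ ?_ ?_ ?_
      · intro x hx
        simp only [Finset.mem_filter, Finset.mem_Icc] at *
        omega
      · intro h hh
        simp only [Finset.mem_filter, Finset.mem_Icc] at *
        omega
      · intro x hx
        ring
      · intro h hh
        ring
      · intro x hx
        rw [dqE_conj, ← dqE_add, ← dqE_add]
        congr 1
        push_cast
        ring
    rw [Finset.sum_congr rfl h2, Finset.sum_comm]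
    refine Finset.sum_congr rfl fun h _ => ?_
    rw [← Finset.sum_filter, Finset.mul_sum]
    refine Finset.sum_congr ?_ fun _ _ => rfl
    ext y
    simp only [Finset.mem_filter, Finset.mem_Icc]
    omega
  have h3 : ‖dqF N α‖ ^ 2 = ‖((‖dqF N α‖ ^ 2 : ℝ) : ℂ)‖ := by
    rw [Complex.norm_real, Real.norm_of_nonneg (by positivity)]
  rw [h3, h1]
  refine (norm_sum_le _ _).trans (Finset.sum_le_sum fun h _ => ?_)
  rw [norm_mul, dqE_norm, one_mul]
  rfl

lemma dq_card_fiber (N q : ℕ) (a : ℤ) (hq : 1 ≤ q) (hqN : q ≤ 4 * N)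
    (hc : IsCoprime a (q : ℤ)) (r : ℤ) :
    ((((Finset.Icc (-(N : ℤ)) N).filter (fun h => h * a % q = r)).card : ℕ) : ℝ)
      ≤ 7 * N / q := by
  have hq0 : (0:ℝ) < q := by exact_mod_cast hq
  have hN : (1:ℝ) ≤ N := by
    have : 1 ≤ N := by omega
    exact_mod_cast this
  rcases Finset.eq_empty_or_nonempty
    ((Finset.Icc (-(N : ℤ)) N).filter (fun h => h * a % q = r)) with he | ⟨h0, hh0⟩
  · rw [he]
    simp
    positivity
  have hsub : (Finset.Icc (-(N : ℤ)) N).filter (fun h => h * a % q = r) ⊆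
      (Finset.Ioc (-(N : ℤ) - 1) N).filter (fun h => h ≡ h0 [ZMOD q]) := by
    intro h hh
    simp only [Finset.mem_filter, Finset.mem_Icc, Finset.mem_Ioc] at *
    refine ⟨⟨by omega, by omega⟩, ?_⟩
    have h1 : (q:ℤ) ∣ h0 * a - h * a := by
      apply Int.ModEq.dvd
      unfold Int.ModEq
      rw [hh.2, hh0.2]
    have h2 : (q:ℤ) ∣ h0 - h := by
      rw [← sub_mul] at h1
      exact (IsCoprime.symm hc).dvd_of_dvd_mul_right h1
    exact (Int.modEq_iff_dvd).2 h2
  have hcard := Int.Ioc_filter_modEq_card (-(N : ℤ) - 1) N (r := (q:ℤ)) (by exact_mod_cast hq) h0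
  have h3 : ((((Finset.Ioc (-(N : ℤ) - 1) N).filter (fun h => h ≡ h0 [ZMOD q])).card : ℤ) : ℚ)
      ≤ (2 * N + 1) / q + 1 := by
    rw [hcard]
    have hq0' : (0:ℚ) < q := by exact_mod_cast hq
    have e1 := Int.floor_le (((N:ℤ) - h0 : ℚ) / ((q:ℤ) : ℚ))
    have e2 := Int.lt_floor_add_one (((-(N:ℤ) - 1 : ℤ) - h0 : ℚ) / ((q:ℤ) : ℚ))
    push_cast at *
    apply max_le
    · have : ((N:ℚ) - h0) / q = (2 * N + 1) / q + (-N - 1 - h0) / q := by ring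
      linarith
    · positivity
  have h4 : ((((Finset.Ioc (-(N : ℤ) - 1) N).filter (fun h => h ≡ h0 [ZMOD q])).card : ℕ) : ℝ)
      ≤ (2 * N + 1) / q + 1 := by
    have h3' := (Rat.cast_le (K := ℝ)).2 h3
    push_cast at h3'
    exact h3'
  have h5 := Finset.card_le_card hsub
  have h6 : (q:ℝ) ≤ 4 * N := by exact_mod_cast hqN
  calc ((((Finset.Icc (-(N : ℤ)) N).filter (fun h => h * a % q = r)).card : ℕ) : ℝ)
      ≤ _ := by exact_mod_cast h5
    _ ≤ _ := h4
    _ = (2 * N + 1 + q) / q := by field_simp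
    _ ≤ 7 * N / q := by gcongr; linarith

lemma dqG_nonmult (N q : ℕ) (a : ℤ) (α : ℝ) (hq : 1 ≤ q)
    (hα : |2 * α - a / q| ≤ 1 / ((4 * N + 1) * q)) (h : ℤ)
    (hh : h ∈ Finset.Icc (-(N : ℤ)) N) (i : ℕ) (hi : h * a % q = i + 1) :
    dqG N α h ≤ 2 * q * (1 / ((i : ℝ) + 1) + 1 / ((q - 1 - i : ℝ))) := by
  have hq0 : (0:ℝ) < q := by exact_mod_cast hq
  have hiq : i + 1 < q := by
    have := Int.emod_lt_of_pos (h * a) (b := (q:ℤ)) (by exact_mod_cast hq)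
    omega
  have hiq' : (i:ℝ) + 1 + 1 ≤ q := by exact_mod_cast hiq
  set w : ℝ := min ((i:ℝ) + 1) (q - 1 - i) with hw
  have hw1 : 1 ≤ w := by
    apply le_min
    · have : (0:ℝ) ≤ i := by positivity
      linarith
    · linarith
  have hh' : |(h:ℝ)| ≤ N := by
    rw [Finset.mem_Icc] at hh
    rw [abs_le]
    exact_mod_cast hh
  have hd : 3 * w / (4 * q) ≤ dqD (2 * α * h) := by
    unfold dqD
    set n := round (2 * α * h)
    have e1 : w ≤ |(h * a - n * q : ℝ)| := by
      have e2 : h * a = q * (h * a / q) + (i + 1) := by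
        rw [← hi]; exact (Int.mul_ediv_add_emod _ _).symm
      have e3 : ((h:ℝ) * a - n * q) = (i + 1) + q * ((h * a / q - n : ℤ) : ℝ) := by
        have : ((h:ℝ) * a) = q * ((h * a / q : ℤ) : ℝ) + (i + 1) := by exact_mod_cast e2
        rw [this]
        push_cast
        ring
      rw [e3]
      rcases le_or_gt 0 (h * a / q - n) with e4 | e4
      · have e5 : (0:ℝ) ≤ ((h * a / q - n : ℤ) : ℝ) := by exact_mod_cast e4
        refine (min_le_left _ _).trans (le_trans ?_ (le_abs_self _))
        nlinarith
      · have e5 : ((h * a / q - n : ℤ) : ℝ) ≤ -1 := by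
          have : (h * a / q - n) ≤ -1 := by omega
          exact_mod_cast this
        refine (min_le_right _ _).trans (le_trans ?_ (neg_le_abs _))
        nlinarith
    have e6 : |(h:ℝ) * (2 * α - a / q)| ≤ 1 / (4 * q) := by
      rw [abs_mul]
      calc |(h:ℝ)| * |2 * α - a / q| ≤ N * (1 / ((4 * N + 1) * q)) := by gcongr
        _ ≤ 1 / (4 * q) := by
          rw [mul_one_div, div_le_div_iff₀ (by positivity) (by positivity)]
          nlinarith
    have e7 : |((h:ℝ) * a - n * q) / q| = |(h * a - n * q : ℝ)| / q := by
      rw [abs_div, abs_of_pos hq0]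
    have e8 : ((h:ℝ) * a - n * q) / q = (2 * α * h - n) - (h:ℝ) * (2 * α - a / q) := by
      field_simp
      ring
    have e9 : |((h:ℝ) * a - n * q) / q| ≤ |2 * α * h - n| + |(h:ℝ) * (2 * α - a / q)| := by
      rw [e8]
      exact abs_sub _ _
    have e10 : w / q ≤ |((h:ℝ) * a - n * q) / q| := by
      rw [e7]; gcongr
    have e11 : 3 * w / (4 * q) ≤ w / q - 1 / (4 * q) := by
      rw [div_sub_div _ _ hq0.ne' (by positivity), div_le_div_iff₀ (by positivity) (by positivity)]
      nlinarith [mul_pos hq0 hq0]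
    linarith
  have hG := dqG_mul N α h
  have h1 : dqG N α h * (3 * w / (4 * q)) ≤ 1 :=
    (mul_le_mul_of_nonneg_left hd (dqG_nonneg _ _ _)).trans hG
  have hw0 : 0 < w := by linarith
  have h2 : dqG N α h ≤ 2 * q * (1 / w) := by
    have : dqG N α h ≤ 1 / (3 * w / (4 * q)) := by
      rw [le_div_iff₀ (by positivity)]; exact h1
    refine this.trans ?_
    rw [one_div_div, mul_one_div, div_le_div_iff₀ (by positivity) (by positivity)]
    nlinarith [mul_pos hq0 hw0]
  refine h2.trans ?_
  have p1 : (0:ℝ) < (i:ℝ) + 1 := by positivity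
  have p2 : (0:ℝ) < q - 1 - i := by linarith
  gcongr
  rcases min_choice ((i:ℝ) + 1) (q - 1 - i) with e | e
  · rw [hw, e]
    have := one_div_pos.2 p2
    linarith
  · rw [hw, e]
    have := one_div_pos.2 p1
    linarith

lemma dq_harm (n : ℕ) : ∑ i ∈ Finset.range n, 1 / ((i:ℝ) + 1) ≤ 1 + Real.log n := by
  have := harmonic_le_one_add_log n
  unfold harmonic at this
  push_cast at this
  simpa using this

lemma dqG_nonmult_sum (N q : ℕ) (a : ℤ) (α : ℝ) (hq : 1 ≤ q) (hqN : q ≤ 4 * N)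
    (hc : IsCoprime a (q : ℤ))
    (hα : |2 * α - a / q| ≤ 1 / ((4 * N + 1) * q)) :
    ∑ h ∈ (Finset.Icc (-(N : ℤ)) N).filter (fun h => ¬ (q:ℤ) ∣ h), dqG N α h
      ≤ 28 * N * (1 + Real.log (4 * N)) := by
  have hq0 : (0:ℝ) < q := by exact_mod_cast hq
  have hq0' : (0:ℤ) < q := by exact_mod_cast hq
  set S := (Finset.Icc (-(N : ℤ)) N).filter (fun h => ¬ (q:ℤ) ∣ h) with hS
  have hr : ∀ h ∈ S, 1 ≤ h * a % q ∧ h * a % q < q := by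
    intro h hh
    rw [hS, Finset.mem_filter] at hh
    have e1 := Int.emod_nonneg (h * a) hq0'.ne'
    have e2 := Int.emod_lt_of_pos (h * a) hq0'
    refine ⟨?_, e2⟩
    by_contra hcon
    have e3 : h * a % q = 0 := by omega
    exact hh.2 ((IsCoprime.symm hc).dvd_of_dvd_mul_right (Int.dvd_of_emod_eq_zero e3))
  have hmap : ∀ h ∈ S, (h * a % q).toNat - 1 ∈ Finset.range (q - 1) := by
    intro h hh
    have := hr h hh
    rw [Finset.mem_range]
    omega
  rw [← Finset.sum_fiberwise_of_maps_to hmap]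
  have hb : ∀ i ∈ Finset.range (q - 1),
      ∑ h ∈ S.filter (fun h => (h * a % q).toNat - 1 = i), dqG N α h
        ≤ 14 * N * (1 / ((i : ℝ) + 1) + 1 / ((q - 1 - i : ℝ))) := by
    intro i hi
    have hi' : i + 1 < q := by rw [Finset.mem_range] at hi; omega
    have hi'' : (i:ℝ) + 1 + 1 ≤ q := by exact_mod_cast hi'
    have p2 : (0:ℝ) < q - 1 - i := by linarith
    have e1 : ∀ h ∈ S.filter (fun h => (h * a % q).toNat - 1 = i), dqG N α h ≤
        2 * q * (1 / ((i : ℝ) + 1) + 1 / ((q - 1 - i : ℝ))) := by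
      intro h hh
      rw [Finset.mem_filter] at hh
      have := hr h hh.1
      refine dqG_nonmult N q a α hq hα h ?_ i ?_
      · exact (Finset.mem_filter.1 hh.1).1
      · have := hh.2
        omega
    refine (Finset.sum_le_card_nsmul _ _ _ e1).trans ?_
    have e2 : ((S.filter (fun h => (h * a % q).toNat - 1 = i)).card : ℝ) ≤ 7 * N / q := by
      refine le_trans ?_ (dq_card_fiber N q a hq hqN hc (i + 1))
      have : S.filter (fun h => (h * a % q).toNat - 1 = i) ⊆
          (Finset.Icc (-(N : ℤ)) N).filter (fun h => h * a % q = i + 1) := by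
        intro h hh
        rw [Finset.mem_filter] at hh
        have h1 := hr h hh.1
        have h2 := hh.2
        rw [Finset.mem_filter]
        exact ⟨(Finset.mem_filter.1 hh.1).1, by omega⟩
      exact_mod_cast Finset.card_le_card this
    rw [nsmul_eq_mul]
    calc _ ≤ (7 * N / q) * (2 * q * (1 / ((i : ℝ) + 1) + 1 / ((q - 1 - i : ℝ)))) := by
          gcongr
      _ = _ := by
          field_simp
          ring
  refine (Finset.sum_le_sum hb).trans ?_
  rw [← Finset.mul_sum, Finset.sum_add_distrib]
  have e3 : ∑ i ∈ Finset.range (q - 1), 1 / ((q - 1 - i : ℝ))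
      = ∑ i ∈ Finset.range (q - 1), 1 / ((i : ℝ) + 1) := by
    rw [← Finset.sum_range_reflect (fun i : ℕ => 1 / ((i : ℝ) + 1))]
    refine Finset.sum_congr rfl fun i hi => ?_
    rw [Finset.mem_range] at hi
    congr 1
    rw [Nat.cast_sub (by omega), Nat.cast_sub (by omega), Nat.cast_sub (by omega)]
    push_cast
    ring
  rw [e3]
  have e4 := dq_harm (q - 1)
  have e5 : Real.log ((q - 1 : ℕ) : ℝ) ≤ Real.log (4 * N) := by
    rcases Nat.eq_zero_or_pos (q - 1) with h | h
    · rw [h]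
      simp only [Nat.cast_zero, Real.log_zero]
      apply Real.log_nonneg
      have : 1 ≤ 4 * N := by omega
      exact_mod_cast this
    · apply Real.log_le_log (by exact_mod_cast h)
      have : q - 1 ≤ 4 * N := by omega
      exact_mod_cast this
  have : (0:ℝ) ≤ 14 * N := by positivity
  nlinarith

lemma dq_sum_Icc_symm (g : ℤ → ℝ) (K : ℕ) :
    ∑ k ∈ Finset.Icc (-(K:ℤ)) K, g k
      = g 0 + ∑ j ∈ Finset.range K, (g ((j:ℤ) + 1) + g (-((j:ℤ) + 1))) := by
  induction K with
  | zero => simp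
  | succ K ih =>
    rw [Finset.sum_range_succ, ← add_assoc, ← ih]
    have : Finset.Icc (-((K + 1 : ℕ):ℤ)) ((K + 1 : ℕ):ℤ)
        = insert ((K:ℤ) + 1) (insert (-((K:ℤ) + 1)) (Finset.Icc (-(K:ℤ)) K)) := by
      ext x
      simp only [Finset.mem_insert, Finset.mem_Icc]
      omega
    rw [this, Finset.sum_insert, Finset.sum_insert]
    · ring
    · simp only [Finset.mem_Icc]; omega
    · simp only [Finset.mem_insert, Finset.mem_Icc]; omega

lemma dq_sum_inv_sqrt (K : ℕ) :
    ∑ j ∈ Finset.range K, 1 / Real.sqrt ((j:ℝ) + 1) ≤ 2 * Real.sqrt K := by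
  induction K with
  | zero => simp
  | succ K ih =>
    rw [Finset.sum_range_succ]
    push_cast
    have h1 : 0 < Real.sqrt ((K:ℝ) + 1) := Real.sqrt_pos.2 (by positivity)
    have h2 := Real.sq_sqrt (show (0:ℝ) ≤ (K:ℝ) + 1 by positivity)
    have h3 := Real.sq_sqrt (show (0:ℝ) ≤ (K:ℝ) by positivity)
    have h4 : 1 / Real.sqrt ((K:ℝ) + 1) ≤ 2 * Real.sqrt ((K:ℝ) + 1) - 2 * Real.sqrt K := by
      rw [div_le_iff₀ h1]
      nlinarith [sq_nonneg (Real.sqrt ((K:ℝ) + 1) - Real.sqrt K)]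
    linarith

lemma dqD_mul (N q : ℕ) (a : ℤ) (α : ℝ) (hq : 1 ≤ q)
    (hα : |2 * α - a / q| ≤ 1 / ((4 * N + 1) * q)) (k : ℤ) (hk : |(k:ℝ)| ≤ N) :
    |(k:ℝ)| * dqD (2 * α * q) ≤ dqD (2 * α * ((q * k : ℤ) : ℝ)) := by
  have hq0 : (0:ℝ) < q := by exact_mod_cast hq
  set ε : ℝ := 2 * α * q - a with hε
  have h1 : dqD (2 * α * q) ≤ |ε| := round_le _ a
  have h2 : |ε| ≤ 1 / (4 * N + 1) := by
    have : ε = (2 * α - a / q) * q := by rw [hε]; field_simp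
    rw [this, abs_mul, abs_of_pos hq0]
    calc _ ≤ 1 / ((4 * N + 1) * q) * (q:ℝ) := by gcongr
      _ = _ := by field_simp
  have h3 : |(k:ℝ)| * |ε| ≤ 1 / 4 := by
    calc _ ≤ (N:ℝ) * (1 / (4 * N + 1)) := by gcongr
      _ ≤ 1 / 4 := by
        rw [mul_one_div, div_le_div_iff₀ (by positivity) (by positivity)]
        linarith
  refine (mul_le_mul_of_nonneg_left h1 (abs_nonneg _)).trans ?_
  unfold dqD
  set n := round (2 * α * ((q * k : ℤ) : ℝ))
  have h4 : 2 * α * ((q * k : ℤ) : ℝ) - n = ((k * a - n : ℤ) : ℝ) + k * ε := by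
    rw [hε]; push_cast; ring
  rw [h4]
  by_cases h5 : k * a - n = 0
  · rw [h5]
    simp [abs_mul]
  · have h6 : (1:ℝ) ≤ |((k * a - n : ℤ) : ℝ)| := by
      exact_mod_cast Int.one_le_abs h5
    have h7 := abs_sub_abs_le_abs_sub (((k * a - n : ℤ) : ℝ)) (-((k:ℝ) * ε))
    rw [abs_neg, abs_mul, sub_neg_eq_add] at h7
    linarith

lemma dqG_mult (N q : ℕ) (a : ℤ) (α : ℝ) (hq : 1 ≤ q)
    (hα : |2 * α - a / q| ≤ 1 / ((4 * N + 1) * q)) (k : ℤ) (hk : |(k:ℝ)| ≤ N) (hk0 : k ≠ 0) :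
    dqG N α (q * k) ≤ Real.sqrt (2 * N ^ 3 / (1 + N ^ 2 * dqD (2 * α * q)))
      * (1 / Real.sqrt |(k:ℝ)|) := by
  have hk1 : (1:ℝ) ≤ |(k:ℝ)| := by exact_mod_cast Int.one_le_abs hk0
  have hy : 0 ≤ dqD (2 * α * q) := abs_nonneg _
  rw [mul_one_div, ← Real.sqrt_div (by positivity)]
  apply Real.le_sqrt_of_sq_le
  have h1 := dqG_nonneg N α (q * k)
  have h2 := dqG_le N α (q * k)
  have h3 := dqG_mul N α (q * k)
  have h4 := dqD_mul N q a α hq hα k hk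
  set G := dqG N α (q * k)
  set d := dqD (2 * α * q)
  have h5 : G * (|(k:ℝ)| * d) ≤ 1 := (mul_le_mul_of_nonneg_left h4 h1).trans h3
  rw [div_div, le_div_iff₀ (by positivity)]
  have hN : (1:ℝ) ≤ N := hk1.trans hk
  have h6 : G * |(k:ℝ)| * (1 + N ^ 2 * d) ≤ 2 * N ^ 2 := by
    have e1 : G * |(k:ℝ)| ≤ N * N := by gcongr
    have e2 : (N:ℝ) ^ 2 * (G * (|(k:ℝ)| * d)) ≤ N ^ 2 * 1 := by gcongr
    nlinarith
  calc G ^ 2 * ((1 + (N:ℝ) ^ 2 * d) * |(k:ℝ)|)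
      = G * (G * |(k:ℝ)| * (1 + (N:ℝ) ^ 2 * d)) := by ring
    _ ≤ (N:ℝ) * (2 * (N:ℝ) ^ 2) := by gcongr
    _ = 2 * (N:ℝ) ^ 3 := by ring

lemma dqG_mult_sum (N q : ℕ) (a : ℤ) (α : ℝ) (hq : 1 ≤ q)
    (hα : |2 * α - a / q| ≤ 1 / ((4 * N + 1) * q)) :
    ∑ h ∈ (Finset.Icc (-(N : ℤ)) N).filter (fun h => (q:ℤ) ∣ h), dqG N α h
      ≤ N + 8 * (N ^ 2 / Real.sqrt (q * (1 + N ^ 2 * dqD (2 * α * q)))) := by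
  have hq0 : (0:ℝ) < q := by exact_mod_cast hq
  have hq0' : (0:ℤ) < q := by exact_mod_cast hq
  have hy : 0 ≤ dqD (2 * α * q) := abs_nonneg _
  set K := N / q with hK
  have hKq : K * q ≤ N := Nat.div_mul_le_self N q
  have hKN : K ≤ N := Nat.div_le_self N q
  have h1 : ∑ h ∈ (Finset.Icc (-(N : ℤ)) N).filter (fun h => (q:ℤ) ∣ h), dqG N α h
      ≤ ∑ k ∈ Finset.Icc (-(K:ℤ)) K, dqG N α (q * k) := by
    have hinj : Set.InjOn (fun k : ℤ => (q:ℤ) * k) (Finset.Icc (-(K:ℤ)) K : Finset ℤ) := by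
      intro x _ y _ hxy
      exact mul_left_cancel₀ hq0'.ne' hxy
    rw [← Finset.sum_image (f := fun h => dqG N α h) hinj]
    apply Finset.sum_le_sum_of_subset_of_nonneg
    · intro h hh
      rw [Finset.mem_filter, Finset.mem_Icc] at hh
      obtain ⟨⟨e1, e2⟩, k, rfl⟩ := hh
      rw [Finset.mem_image]
      refine ⟨k, ?_, rfl⟩
      rw [Finset.mem_Icc]
      have hKd : (K:ℤ) = (N:ℤ) / q := by rw [hK]; push_cast; rfl
      constructor
      · have : -k ≤ K := by
          rw [hKd, Int.le_ediv_iff_mul_le hq0']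
          linarith
        linarith
      · rw [hKd, Int.le_ediv_iff_mul_le hq0']
        linarith
    · intro _ _ _
      exact dqG_nonneg _ _ _
  refine h1.trans ?_
  rw [dq_sum_Icc_symm]
  set B := Real.sqrt (2 * N ^ 3 / (1 + N ^ 2 * dqD (2 * α * q))) with hB
  have h2 : ∀ j ∈ Finset.range K,
      dqG N α (q * ((j:ℤ) + 1)) + dqG N α (q * (-((j:ℤ) + 1)))
        ≤ 2 * B * (1 / Real.sqrt ((j:ℝ) + 1)) := by
    intro j hj
    rw [Finset.mem_range] at hj
    have hjN : (j:ℝ) + 1 ≤ N := by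
      have : j + 1 ≤ N := by omega
      exact_mod_cast this
    have ea : |(((j:ℤ) + 1 : ℤ) : ℝ)| = (j:ℝ) + 1 := by
      push_cast
      rw [abs_of_nonneg (by positivity)]
    have eb : |((-((j:ℤ) + 1) : ℤ) : ℝ)| = (j:ℝ) + 1 := by
      push_cast
      rw [abs_neg, abs_of_nonneg (by positivity)]
    have e1 := dqG_mult N q a α hq hα ((j:ℤ) + 1) (by rw [ea]; exact hjN) (by omega)
    have e2 := dqG_mult N q a α hq hα (-((j:ℤ) + 1)) (by rw [eb]; exact hjN) (by omega)
    rw [ea] at e1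
    rw [eb] at e2
    linarith
  have h3 := Finset.sum_le_sum h2
  rw [← Finset.mul_sum] at h3
  have h4 := dq_sum_inv_sqrt K
  have hB0 : 0 ≤ B := Real.sqrt_nonneg _
  have h5 : dqG N α (q * 0) ≤ N := dqG_le _ _ _
  have h6 : B * Real.sqrt K ≤ 2 * (N ^ 2 / Real.sqrt (q * (1 + N ^ 2 * dqD (2 * α * q)))) := by
    have hKr : (K:ℝ) ≤ N / q := by
      rw [le_div_iff₀ hq0]
      exact_mod_cast hKq
    rw [hB, ← Real.sqrt_mul (by positivity)]
    apply Real.sqrt_le_iff.2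
    constructor
    · positivity
    · rw [mul_pow, div_pow, Real.sq_sqrt (by positivity)]
      calc 2 * (N:ℝ) ^ 3 / (1 + N ^ 2 * dqD (2 * α * q)) * K
          ≤ 2 * (N:ℝ) ^ 3 / (1 + N ^ 2 * dqD (2 * α * q)) * (N / q) := by gcongr
        _ = 2 * ((N ^ 2) ^ 2 / (q * (1 + N ^ 2 * dqD (2 * α * q)))) := by
          field_simp
        _ ≤ 2 ^ 2 * ((N ^ 2) ^ 2 / (q * (1 + N ^ 2 * dqD (2 * α * q)))) := by
          gcongr
          norm_num
  have h7 : 2 * B * ∑ j ∈ Finset.range K, 1 / Real.sqrt ((j:ℝ) + 1)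
      ≤ 2 * B * (2 * Real.sqrt K) := by gcongr
  linarith

lemma dqF_weyl (N : ℕ) (hN : 1 ≤ N) (α : ℝ) : ∃ q : ℕ, 1 ≤ q ∧ q ≤ 4 * N ∧
    ‖dqF N α‖ ^ 2 ≤ 29 * N * (1 + Real.log (4 * N))
      + 8 * (N ^ 2 / Real.sqrt (q * (1 + N ^ 2 * dqD (2 * α * q)))) := by
  obtain ⟨r, hr1, hr2⟩ := Real.exists_rat_abs_sub_le_and_den_le (2 * α) (n := 4 * N) (by omega)
  refine ⟨r.den, r.den_pos, hr2, ?_⟩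
  have hα : |2 * α - r.num / r.den| ≤ 1 / ((4 * N + 1) * r.den) := by
    rw [Rat.cast_def] at hr1
    push_cast at hr1
    exact hr1
  have hc : IsCoprime r.num (r.den : ℤ) := by
    rw [Int.isCoprime_iff_gcd_eq_one]
    exact r.reduced
  have h1 := dqG_nonmult_sum N r.den r.num α r.den_pos hr2 hc hα
  have h2 := dqG_mult_sum N r.den r.num α r.den_pos hα
  have h3 := dqF_sq N α
  rw [← Finset.sum_filter_add_sum_filter_not _ (fun h : ℤ => (r.den:ℤ) ∣ h)] at h3
  have h4 : 0 ≤ Real.log (4 * N) := by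
    apply Real.log_nonneg
    have : 1 ≤ 4 * N := by omega
    exact_mod_cast this
  have h5 : (0:ℝ) ≤ N := by positivity
  nlinarith [mul_nonneg h5 h4]

lemma dqF_five (N : ℕ) (hN : 1 ≤ N) (α : ℝ) : ∃ q : ℕ, 1 ≤ q ∧ q ≤ 4 * N ∧
    ‖dqF N α‖ ^ 5 ≤ (638:ℝ) ^ (5/2 : ℝ) * (N:ℝ) ^ 3
      + (16:ℝ) ^ (5/2 : ℝ) * (N:ℝ) ^ 5 * ((q:ℝ) ^ (-(5/4) : ℝ)
        * (1 + N ^ 2 * dqD (2 * α * q)) ^ (-(5/4) : ℝ)) := by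
  obtain ⟨q, hq, hqN, h⟩ := dqF_weyl N hN α
  refine ⟨q, hq, hqN, ?_⟩
  have hq0 : (0:ℝ) < q := by exact_mod_cast hq
  have hN0 : (0:ℝ) < N := by exact_mod_cast hN
  have hN1 : (1:ℝ) ≤ N := by exact_mod_cast hN
  have hy : 0 ≤ dqD (2 * α * q) := abs_nonneg _
  set D : ℝ := 1 + N ^ 2 * dqD (2 * α * q) with hD
  have hD0 : 0 < D := by positivity
  set A : ℝ := 8 * (N ^ 2 / Real.sqrt (q * D)) with hA
  have hA0 : 0 ≤ A := by positivity
  set L : ℝ := 319 * (N:ℝ) ^ (6/5 : ℝ) with hL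
  have hL0 : 0 ≤ L := by positivity
  have hlog : 29 * N * (1 + Real.log (4 * N)) ≤ L := by
    have e1 : Real.log (4 * N) ≤ (4 * N : ℝ) ^ (1/5 : ℝ) / (1/5) :=
      Real.log_le_rpow_div (by positivity) (by norm_num)
    have e2 : (4 * N : ℝ) ^ (1/5 : ℝ) = 4 ^ (1/5 : ℝ) * (N:ℝ) ^ (1/5 : ℝ) :=
      Real.mul_rpow (by norm_num) (by positivity)
    have e3 : (4:ℝ) ^ (1/5 : ℝ) ≤ 2 := by
      calc (4:ℝ) ^ (1/5 : ℝ) ≤ (4:ℝ) ^ (1/2 : ℝ) :=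
            Real.rpow_le_rpow_of_exponent_le (by norm_num) (by norm_num)
        _ = 2 := by
            rw [← Real.sqrt_eq_rpow, show (4:ℝ) = 2 ^ 2 by norm_num]
            exact Real.sqrt_sq (by norm_num)
    have e4 : (1:ℝ) ≤ (N:ℝ) ^ (1/5 : ℝ) := Real.one_le_rpow hN1 (by norm_num)
    have e5 : (N:ℝ) ^ (6/5 : ℝ) = N * (N:ℝ) ^ (1/5 : ℝ) := by
      rw [show (6/5 : ℝ) = 1 + 1/5 by norm_num, Real.rpow_add hN0, Real.rpow_one]
    have e6 : 1 + Real.log (4 * N) ≤ 11 * (N:ℝ) ^ (1/5 : ℝ) := by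
      rw [e2] at e1
      have : (4:ℝ) ^ (1/5 : ℝ) * (N:ℝ) ^ (1/5 : ℝ) ≤ 2 * (N:ℝ) ^ (1/5 : ℝ) := by gcongr
      linarith
    rw [hL, e5]
    have := mul_le_mul_of_nonneg_left e6 (show (0:ℝ) ≤ 29 * N by positivity)
    linarith
  have hF : ‖dqF N α‖ ^ 2 ≤ L + A := by linarith
  have e0 : ‖dqF N α‖ ^ 5 = (‖dqF N α‖ ^ 2) ^ (5/2 : ℝ) := by
    rw [← Real.rpow_natCast_mul (norm_nonneg _), ← Real.rpow_natCast]
    norm_num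
  have eL : (2 * L) ^ (5/2 : ℝ) = (638:ℝ) ^ (5/2 : ℝ) * (N:ℝ) ^ 3 := by
    rw [hL, ← mul_assoc, Real.mul_rpow (by norm_num) (by positivity), ← Real.rpow_mul hN0.le,
      ← Real.rpow_natCast (N:ℝ) 3]
    norm_num
  have eA : (2 * A) ^ (5/2 : ℝ) = (16:ℝ) ^ (5/2 : ℝ) * (N:ℝ) ^ 5 * ((q:ℝ) ^ (-(5/4) : ℝ)
        * D ^ (-(5/4) : ℝ)) := by
    rw [hA, ← mul_assoc, Real.mul_rpow (by norm_num) (by positivity),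
      Real.div_rpow (by positivity) (by positivity), Real.sqrt_eq_rpow,
      ← Real.rpow_mul (by positivity), ← Real.rpow_natCast_mul hN0.le,
      ← Real.mul_rpow hq0.le hD0.le, Real.rpow_neg (by positivity), ← Real.rpow_natCast (N:ℝ) 5]
    norm_num
    ring
  rw [e0, ← eL, ← eA]
  rcases le_total L A with hc | hc
  · have : (‖dqF N α‖ ^ 2) ^ (5/2 : ℝ) ≤ (2 * A) ^ (5/2 : ℝ) :=
      Real.rpow_le_rpow (by positivity) (by linarith) (by norm_num)
    have : 0 ≤ (2 * L) ^ (5/2 : ℝ) := by positivity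
    linarith
  · have : (‖dqF N α‖ ^ 2) ^ (5/2 : ℝ) ≤ (2 * L) ^ (5/2 : ℝ) :=
      Real.rpow_le_rpow (by positivity) (by linarith) (by norm_num)
    have : 0 ≤ (2 * A) ^ (5/2 : ℝ) := by positivity
    linarith

lemma dq_zeta : ∃ Z : ℝ, 0 < Z ∧ ∀ n : ℕ,
    ∑ j ∈ Finset.range n, ((j:ℝ) + 1) ^ (-(5/4) : ℝ) ≤ Z := by
  have hs : Summable (fun j : ℕ => ((j:ℝ) + 1) ^ (-(5/4) : ℝ)) := by
    have h1 : Summable (fun j : ℕ => (j:ℝ) ^ (-(5/4) : ℝ)) :=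
      Real.summable_nat_rpow.2 (by norm_num)
    have := (summable_nat_add_iff 1).2 h1
    simpa using this
  refine ⟨∑' j : ℕ, ((j:ℝ) + 1) ^ (-(5/4) : ℝ), ?_, fun n => ?_⟩
  · exact hs.tsum_pos (fun _ => by positivity) 0 (by positivity)
  · exact hs.sum_le_tsum _ (fun _ _ => by positivity)

lemma dq_block (g : ℕ → ℝ) (hg : Antitone g) (m J : ℕ) :
    ∑ u ∈ Finset.range (m * J), g u ≤ m * ∑ j ∈ Finset.range J, g (m * j) := by
  induction J with
  | zero => simp
  | succ J ih =>
    rw [Nat.mul_succ, Finset.sum_range_add, Finset.sum_range_succ, mul_add]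
    refine add_le_add ih ?_
    have : ∀ x ∈ Finset.range m, g (m * J + x) ≤ g (m * J) := fun x _ => hg (by omega)
    refine (Finset.sum_le_card_nsmul _ _ _ this).trans ?_
    simp

lemma dq_sum_decay : ∃ C : ℝ, 0 < C ∧ ∀ N P : ℕ, 1 ≤ N → N ^ 2 ≤ P →
    ∑ u ∈ Finset.range P, (1 + (N:ℝ) ^ 2 * ((u:ℝ) / P)) ^ (-(5/4) : ℝ) ≤ C * (P / N ^ 2) := by
  obtain ⟨Z, hZ, hZs⟩ := dq_zeta
  refine ⟨(1/2 : ℝ) ^ (-(5/4) : ℝ) * Z, by positivity, fun N P hN hP => ?_⟩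
  have hN0 : (0:ℝ) < N := by exact_mod_cast hN
  have hN2 : 0 < N ^ 2 := by positivity
  have hP0 : 0 < P := by omega
  have hP0' : (0:ℝ) < P := by exact_mod_cast hP0
  set g : ℕ → ℝ := fun u => (1 + (N:ℝ) ^ 2 * ((u:ℝ) / P)) ^ (-(5/4) : ℝ) with hgdef
  have hg : Antitone g := by
    intro u v huv
    apply Real.rpow_le_rpow_of_nonpos (by positivity) _ (by norm_num)
    gcongr
  have hg0 : ∀ u, 0 ≤ g u := fun u => by simp only [hgdef]; positivity
  set m := P / N ^ 2 with hm
  have hm1 : 1 ≤ m := (Nat.one_le_div_iff hN2).2 hP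
  have hmP : (m:ℝ) ≤ P / N ^ 2 := by
    rw [le_div_iff₀ (by positivity)]
    exact_mod_cast Nat.div_mul_le_self P (N ^ 2)
  have hmP2 : (P:ℝ) ≤ 2 * m * N ^ 2 := by
    have h1 : P < (m + 1) * N ^ 2 := by
      rw [hm, mul_comm]
      exact Nat.lt_mul_div_succ P hN2
    have h2 : (m + 1) * N ^ 2 ≤ 2 * m * N ^ 2 := Nat.mul_le_mul_right _ (by omega)
    have h3 : P ≤ 2 * m * N ^ 2 := by omega
    exact_mod_cast h3
  have h1 : ∑ u ∈ Finset.range P, g u ≤ ∑ u ∈ Finset.range (m * P), g u := by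
    apply Finset.sum_le_sum_of_subset_of_nonneg
    · apply Finset.range_subset_range.2
      nlinarith
    · exact fun _ _ _ => hg0 _
  have h2 : ∀ j ∈ Finset.range P, g (m * j) ≤
      (1/2 : ℝ) ^ (-(5/4) : ℝ) * ((j:ℝ) + 1) ^ (-(5/4) : ℝ) := by
    intro j _
    rw [← Real.mul_rpow (by norm_num) (by positivity)]
    apply Real.rpow_le_rpow_of_nonpos (by positivity) _ (by norm_num)
    have e1 : (1/2 : ℝ) ≤ N ^ 2 * m / P := by
      rw [le_div_iff₀ hP0']
      linarith
    have e2 : (N:ℝ) ^ 2 * (((m * j : ℕ) : ℝ) / P) = (N ^ 2 * m / P) * j := by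
      push_cast; ring
    rw [e2]
    have e3 : (1/2 : ℝ) * j ≤ (N ^ 2 * m / P) * j := by gcongr
    linarith
  calc ∑ u ∈ Finset.range P, g u ≤ _ := h1
    _ ≤ _ := dq_block g hg m P
    _ ≤ m * ((1/2 : ℝ) ^ (-(5/4) : ℝ) * Z) := by
      gcongr
      refine (Finset.sum_le_sum h2).trans ?_
      rw [← Finset.mul_sum]
      gcongr
      exact hZs P
    _ ≤ (P / N ^ 2) * ((1/2 : ℝ) ^ (-(5/4) : ℝ) * Z) := by gcongr
    _ = _ := by ring

lemma dq_sum_zmod : ∃ C : ℝ, 0 < C ∧ ∀ N P : ℕ, 1 ≤ N → N ^ 2 ≤ P → [Fact P.Prime] →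
    ∀ q : ℕ, 1 ≤ q → 2 * q < P →
    ∑ t : ZMod P, (1 + (N:ℝ) ^ 2 * dqD (2 * ((t.val : ℝ) / P) * q)) ^ (-(5/4) : ℝ)
      ≤ C * (P / N ^ 2) := by
  obtain ⟨C, hC, hCs⟩ := dq_sum_decay
  refine ⟨2 * C, by positivity, fun N P hN hP hPp q hq hqP => ?_⟩
  have hP0 : 0 < P := hPp.out.pos
  have hP0' : (0:ℝ) < P := by exact_mod_cast hP0
  set g : ℕ → ℝ := fun u => (1 + (N:ℝ) ^ 2 * ((u:ℝ) / P)) ^ (-(5/4) : ℝ) with hgdef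
  have hg : Antitone g := by
    intro u v huv
    apply Real.rpow_le_rpow_of_nonpos (by positivity) _ (by norm_num)
    gcongr
  have hg0 : ∀ u, 0 ≤ g u := fun u => by simp only [hgdef]; positivity
  have hu : ((2 * q : ℕ) : ZMod P) ≠ 0 := by
    intro h0
    rw [ZMod.natCast_eq_zero_iff] at h0
    have := Nat.le_of_dvd (by omega) h0
    omega
  have h1 : ∀ t : ZMod P,
      (1 + (N:ℝ) ^ 2 * dqD (2 * ((t.val : ℝ) / P) * q)) ^ (-(5/4) : ℝ)
        ≤ (fun u : ZMod P => g u.val + g (P - u.val)) (((2 * q : ℕ) : ZMod P) * t) := by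
    intro t
    have e1 : 2 * ((t.val : ℝ) / P) * q = ((2 * q * t.val : ℕ) : ℝ) / P := by
      push_cast; ring
    have e2 : (((2 * q : ℕ) : ZMod P) * t).val = (2 * q * t.val) % P := by
      rw [ZMod.val_mul, ZMod.val_natCast, Nat.mod_mul_mod]
    have e3 : dqD (2 * ((t.val : ℝ) / P) * q) =
        ((min ((2 * q * t.val) % P) (P - (2 * q * t.val) % P) : ℕ) : ℝ) / P := by
      unfold dqD
      rw [e1, abs_sub_round_div_natCast_eq]
    simp only
    rw [e3, e2]
    change g (min ((2 * q * t.val) % P) (P - (2 * q * t.val) % P)) ≤ _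
    rcases min_choice ((2 * q * t.val) % P) (P - (2 * q * t.val) % P) with h | h
    · rw [h]
      have := hg0 (P - (2 * q * t.val) % P)
      linarith
    · rw [h]
      have := hg0 ((2 * q * t.val) % P)
      linarith
  refine (Finset.sum_le_sum fun t _ => h1 t).trans ?_
  refine (Equiv.sum_comp (Equiv.mulLeft₀ _ hu)
    (fun u : ZMod P => g u.val + g (P - u.val))).le.trans ?_
  have h2 : ∑ u : ZMod P, (g u.val + g (P - u.val))
      ≤ ∑ u ∈ Finset.range P, (g u + g (P - u)) := by
    have hinj : Set.InjOn (fun u : ZMod P => u.val) (Finset.univ : Finset (ZMod P)) :=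
      fun x _ y _ h => ZMod.val_injective P h
    rw [← Finset.sum_image (f := fun u => g u + g (P - u)) hinj]
    apply Finset.sum_le_sum_of_subset_of_nonneg
    · intro u hu
      rw [Finset.mem_image] at hu
      obtain ⟨x, _, rfl⟩ := hu
      exact Finset.mem_range.2 (ZMod.val_lt x)
    · intro u _ _
      exact add_nonneg (hg0 _) (hg0 _)
  refine h2.trans ?_
  rw [Finset.sum_add_distrib]
  have h3 : ∑ u ∈ Finset.range P, g (P - u) ≤ ∑ u ∈ Finset.range P, g u := by
    rw [← Finset.sum_range_reflect g]
    refine Finset.sum_le_sum fun u hu => hg (by omega)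
  have h4 := hCs N P hN hP
  change ∑ u ∈ Finset.range P, g u ≤ _ at h4
  linarith

lemma dq_fifth_moment : ∃ C : ℝ, 0 < C ∧ ∀ N P : ℕ, 1 ≤ N → N ^ 2 ≤ P → 8 * N < P →
    [Fact P.Prime] →
    ∑ t : ZMod P, ‖dqF N ((t.val : ℝ) / P)‖ ^ 5 ≤ C * (P * (N:ℝ) ^ 3) := by
  obtain ⟨C, hC, hCs⟩ := dq_sum_zmod
  obtain ⟨Z, hZ, hZs⟩ := dq_zeta
  refine ⟨(638:ℝ) ^ (5/2 : ℝ) + (16:ℝ) ^ (5/2 : ℝ) * (Z * C), by positivity,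
    fun N P hN hP hNP hPp => ?_⟩
  have hN0 : (0:ℝ) < N := by exact_mod_cast hN
  have hP0 : 0 < P := hPp.out.pos
  set w : ℕ → ZMod P → ℝ := fun q t =>
    (1 + (N:ℝ) ^ 2 * dqD (2 * ((t.val : ℝ) / P) * q)) ^ (-(5/4) : ℝ) with hw
  have hw0 : ∀ q t, 0 ≤ w q t := by
    intro q t
    have : 0 ≤ dqD (2 * ((t.val : ℝ) / P) * q) := abs_nonneg _
    simp only [hw]
    positivity
  have h1 : ∀ t : ZMod P, ‖dqF N ((t.val : ℝ) / P)‖ ^ 5 ≤ (638:ℝ) ^ (5/2 : ℝ) * (N:ℝ) ^ 3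
      + (16:ℝ) ^ (5/2 : ℝ) * (N:ℝ) ^ 5 * ∑ j ∈ Finset.range (4 * N),
        ((j:ℝ) + 1) ^ (-(5/4) : ℝ) * w (j + 1) t := by
    intro t
    obtain ⟨q, hq, hqN, h⟩ := dqF_five N hN ((t.val : ℝ) / P)
    refine h.trans ?_
    gcongr
    have e1 := Finset.single_le_sum (s := Finset.range (4 * N))
      (f := fun j : ℕ => ((j:ℝ) + 1) ^ (-(5/4) : ℝ) * w (j + 1) t)
      (fun j _ => mul_nonneg (by positivity) (hw0 _ _)) (a := q - 1)
      (Finset.mem_range.2 (by omega))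
    refine le_trans (le_of_eq ?_) e1
    simp only [hw]
    rw [Nat.sub_add_cancel hq]
    have : ((q - 1 : ℕ) : ℝ) + 1 = q := by
      rw [Nat.cast_sub hq]; simp
    rw [this]
  refine (Finset.sum_le_sum fun t _ => h1 t).trans ?_
  rw [Finset.sum_add_distrib, ← Finset.mul_sum, ← Finset.mul_sum, Finset.sum_comm]
  simp only [← Finset.mul_sum]
  have h2 : ∑ j ∈ Finset.range (4 * N), ((j:ℝ) + 1) ^ (-(5/4) : ℝ) * ∑ t : ZMod P, w (j + 1) t
      ≤ Z * (C * (P / N ^ 2)) := by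
    calc _ ≤ ∑ j ∈ Finset.range (4 * N), ((j:ℝ) + 1) ^ (-(5/4) : ℝ) * (C * (P / N ^ 2)) := by
          refine Finset.sum_le_sum fun j hj => ?_
          rw [Finset.mem_range] at hj
          gcongr
          exact hCs N P hN hP (j + 1) (by omega) (by omega)
      _ ≤ _ := by
          rw [← Finset.sum_mul]
          gcongr
          exact hZs _
  have h3 : (16:ℝ) ^ (5/2 : ℝ) * (N:ℝ) ^ 5 * ∑ j ∈ Finset.range (4 * N),
      ((j:ℝ) + 1) ^ (-(5/4) : ℝ) * ∑ t : ZMod P, w (j + 1) t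
      ≤ (16:ℝ) ^ (5/2 : ℝ) * (N:ℝ) ^ 5 * (Z * (C * (P / N ^ 2))) := by gcongr
  have h4 : (16:ℝ) ^ (5/2 : ℝ) * (N:ℝ) ^ 5 * (Z * (C * (P / N ^ 2)))
      = (16:ℝ) ^ (5/2 : ℝ) * (Z * C) * (P * (N:ℝ) ^ 3) := by
    field_simp
  rw [Finset.sum_const, Finset.card_univ, ZMod.card, nsmul_eq_mul]
  linarith

lemma dqF_zmod (N P : ℕ) [NeZero P] (t : ZMod P) :
    dqF N ((t.val : ℝ) / P)
      = ∑ x ∈ Finset.Icc (1:ℤ) N, ZMod.stdAddChar (t * (x : ZMod P) ^ 2) := by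
  unfold dqF
  refine Finset.sum_congr rfl fun x _ => ?_
  have e1 : t * (x : ZMod P) ^ 2 = (((t.val : ℤ) * x ^ 2 : ℤ) : ZMod P) := by
    push_cast
    rw [ZMod.natCast_zmod_val]
  rw [e1, ZMod.stdAddChar_coe]
  unfold dqE
  congr 1
  push_cast
  ring

lemma dqF_norm_le (N : ℕ) (α : ℝ) : ‖dqF N α‖ ≤ N := by
  unfold dqF
  refine (norm_sum_le _ _).trans ?_
  simp [dqE_norm]

lemma dq_prod_le {s : ℕ} (hs : 1 ≤ s) (x : Fin s → ℝ) (hx : ∀ i, 0 ≤ x i) :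
    ∏ i, x i ≤ ∑ i, x i ^ s := by
  have : Nonempty (Fin s) := ⟨⟨0, hs⟩⟩
  obtain ⟨i0, h0⟩ := Finite.exists_max x
  calc ∏ i, x i ≤ ∏ _i : Fin s, x i0 := Finset.prod_le_prod (fun i _ => hx i) (fun i _ => h0 i)
    _ = x i0 ^ s := by simp
    _ ≤ ∑ i, x i ^ s := Finset.single_le_sum (f := fun i => x i ^ s)
        (fun i _ => pow_nonneg (hx i) s) (Finset.mem_univ i0)

lemma dq_orth (s N P : ℕ) [Fact P.Prime] (a : Fin s → ℤ) :
    (P:ℝ) * (((Fintype.piFinset fun _ : Fin s => Finset.Icc (1 : ℤ) N).filter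
            (fun x => ∑ i, a i * x i ^ 2 = 0)).card : ℝ)
      ≤ ∑ t : ZMod P, ∏ i, ‖dqF N ((((a i : ZMod P) * t).val : ℝ) / P)‖ := by
  set X := Fintype.piFinset fun _ : Fin s => Finset.Icc (1 : ℤ) N with hX
  set Y := X.filter (fun x => ((∑ i, a i * x i ^ 2 : ℤ) : ZMod P) = 0) with hY
  have h1 : (X.filter (fun x => ∑ i, a i * x i ^ 2 = 0)).card ≤ Y.card := by
    apply Finset.card_le_card
    intro x hx
    rw [Finset.mem_filter] at hx ⊢
    exact ⟨hx.1, by rw [hx.2]; simp⟩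
  have h2 : ∑ t : ZMod P, ∏ i, dqF N ((((a i : ZMod P) * t).val : ℝ) / P)
      = (P:ℂ) * (Y.card : ℂ) := by
    have e1 : ∀ t : ZMod P, ∏ i, dqF N ((((a i : ZMod P) * t).val : ℝ) / P)
        = ∑ x ∈ X, ZMod.stdAddChar (t * ((∑ i, a i * x i ^ 2 : ℤ) : ZMod P)) := by
      intro t
      simp only [dqF_zmod]
      rw [Finset.prod_univ_sum]
      refine Finset.sum_congr rfl fun x _ => ?_
      have hmap : ∀ f : Fin s → ZMod P,
          ZMod.stdAddChar (∑ i, f i) = ∏ i, ZMod.stdAddChar (f i) := fun f =>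
        map_prod (ZMod.stdAddChar (N := P)).toMonoidHom (fun i => Multiplicative.ofAdd (f i)) _
      rw [← hmap]
      congr 1
      push_cast
      rw [Finset.mul_sum]
      refine Finset.sum_congr rfl fun i _ => ?_
      ring
    simp only [e1]
    rw [Finset.sum_comm]
    have e2 : ∀ x ∈ X, ∑ t : ZMod P,
        ZMod.stdAddChar (t * ((∑ i, a i * x i ^ 2 : ℤ) : ZMod P))
        = if ((∑ i, a i * x i ^ 2 : ℤ) : ZMod P) = 0 then (P:ℂ) else 0 := by
      intro x _
      rw [AddChar.sum_mulShift _ (ZMod.isPrimitive_stdAddChar P), ZMod.card]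
      split_ifs <;> simp
    rw [Finset.sum_congr rfl e2, ← Finset.sum_filter, Finset.sum_const, nsmul_eq_mul, mul_comm]
  have h3 : (P:ℝ) * (Y.card : ℝ) = ‖(P:ℂ) * (Y.card : ℂ)‖ := by
    rw [norm_mul, Complex.norm_natCast, Complex.norm_natCast]
  calc _ ≤ (P:ℝ) * (Y.card : ℝ) := by
        gcongr
    _ = _ := h3
    _ ≤ _ := by
        rw [← h2]
        refine (norm_sum_le _ _).trans (le_of_eq ?_)
        simp only [norm_prod]

/-- Circle-method upper bound: for nonzero coefficients and `s ≥ 5`, the number of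
solutions in `[N]^s` to `a₁x₁² + ⋯ + a_s x_s² = 0` is `O(N^{s−2})`. -/
theorem diagonal_quadric_solution_count :
    ∀ s : ℕ, 5 ≤ s → ∀ a : Fin s → ℤ, (∀ i, a i ≠ 0) → ∃ C : ℝ, 0 < C ∧
      ∀ N : ℕ, 1 ≤ N →
        (((Fintype.piFinset fun _ : Fin s => Finset.Icc (1 : ℤ) N).filter
            (fun x => ∑ i, a i * x i ^ 2 = 0)).card : ℝ) ≤ C * (N : ℝ) ^ (s - 2) := by
  intro s hs a ha
  obtain ⟨C, hC, hCs⟩ := dq_fifth_moment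
  have hs0 : (0:ℝ) < s := by
    have : 0 < s := by omega
    exact_mod_cast this
  refine ⟨s * C, by positivity, fun N hN => ?_⟩
  obtain ⟨P, hPle, hPp⟩ := Nat.exists_infinite_primes (8 * N + N ^ 2 + ∑ i, (a i).natAbs + 1)
  have : Fact P.Prime := ⟨hPp⟩
  have hP0 : (0:ℝ) < P := by exact_mod_cast hPp.pos
  have hane : ∀ i, (a i : ZMod P) ≠ 0 := by
    intro i h0
    rw [ZMod.intCast_zmod_eq_zero_iff_dvd] at h0
    have h1 := Int.natAbs_dvd_natAbs.2 h0
    have h2 := Nat.le_of_dvd (Int.natAbs_pos.2 (ha i)) h1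
    have h3 := Finset.single_le_sum (f := fun i => (a i).natAbs) (s := Finset.univ)
      (fun _ _ => Nat.zero_le _) (Finset.mem_univ i)
    simp only [Int.natAbs_natCast] at h2 h3
    omega
  have h5 := hCs N P hN (by omega) (by omega)
  have key := dq_orth s N P a
  have hb : ∑ t : ZMod P, ∏ i, ‖dqF N ((((a i : ZMod P) * t).val : ℝ) / P)‖
      ≤ s * ((N:ℝ) ^ (s - 5) * (C * (P * (N:ℝ) ^ 3))) := by
    calc _ ≤ ∑ t : ZMod P, ∑ i, (N:ℝ) ^ (s - 5)
          * ‖dqF N ((((a i : ZMod P) * t).val : ℝ) / P)‖ ^ 5 := by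
          refine Finset.sum_le_sum fun t _ => ?_
          refine (dq_prod_le (by omega) _ (fun i => norm_nonneg _)).trans ?_
          refine Finset.sum_le_sum fun i _ => ?_
          have : s = (s - 5) + 5 := by omega
          conv_lhs => rw [this, pow_add]
          gcongr
          exact dqF_norm_le _ _
      _ = ∑ i : Fin s, (N:ℝ) ^ (s - 5) * ∑ t : ZMod P, ‖dqF N ((t.val : ℝ) / P)‖ ^ 5 := by
          rw [Finset.sum_comm]
          refine Finset.sum_congr rfl fun i _ => ?_
          rw [← Finset.mul_sum]
          congr 1
          exact Equiv.sum_comp (Equiv.mulLeft₀ _ (hane i))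
            (fun u : ZMod P => ‖dqF N ((u.val : ℝ) / P)‖ ^ 5)
      _ ≤ ∑ i : Fin s, (N:ℝ) ^ (s - 5) * (C * (P * (N:ℝ) ^ 3)) := by
          gcongr
      _ = _ := by
          rw [Finset.sum_const, Finset.card_univ, Fintype.card_fin, nsmul_eq_mul]
  have hpow : (N:ℝ) ^ (s - 2) = (N:ℝ) ^ (s - 5) * (N:ℝ) ^ 3 := by
    rw [← pow_add]
    congr 1
    omega
  have hfin := key.trans hb
  refine le_of_mul_le_mul_left (hfin.trans (le_of_eq ?_)) hP0
  rw [hpow]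
  ring
end
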